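/- Strong complementary information tradeoff for conjugate observables: for any pure tripartite state |ρ⟩^{ABE} with dim A = d, S(X^A|B)_ρ + S(Z^A|E)_ρ ≥ log₂ d, where X and Z are generalized Pauli observables on A with mutually unbiased eigenbases and the conditional entropies are of the states dephased on A in the respective eigenbases. -/

import Mathlib

open Matrix Kronecker ComplexOrder

noncomputable section

/-- ω = e^{2πi/d} -/
noncomputable def qomega (d : ℕ) : ℂ := Complex.exp (2 * Real.pi * Complex.I / d)

/-- Generalized Pauli Z: Z|k⟩ = ω^k |k⟩. -/
noncomputable def pauliZ (d : ℕ) : Matrix (Fin d) (Fin d) ℂ :=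
  Matrix.diagonal fun k : Fin d => qomega d ^ (k : ℕ)

/-- Generalized Pauli X: X|k⟩ = |k+1 mod d⟩. -/
noncomputable def pauliX (d : ℕ) [NeZero d] : Matrix (Fin d) (Fin d) ℂ :=
  Matrix.of fun i j : Fin d => if i = j + 1 then 1 else 0

/-- Fourier matrix: column j is |x̃_j⟩ = (1/√d) Σ_k ω^{jk} |k⟩. -/
noncomputable def fourierMat (d : ℕ) : Matrix (Fin d) (Fin d) ℂ :=
  Matrix.of fun k j : Fin d => qomega d ^ ((j : ℕ) * (k : ℕ)) / (Real.sqrt d : ℂ)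

/-- density operator predicate -/
def IsDensity {n : Type*} [Fintype n] (ρ : Matrix n n ℂ) : Prop :=
  ρ.PosSemidef ∧ ρ.trace = 1

/-- von Neumann entropy in base 2, via eigenvalues. -/
noncomputable def vN {n : Type*} [Fintype n] [DecidableEq n] (ρ : Matrix n n ℂ) : ℝ :=
  if h : ρ.IsHermitian then ∑ i, -(h.eigenvalues i * Real.logb 2 (h.eigenvalues i)) else 0

/-- complete dephasing in the standard basis -/
def dephase {n : Type*} [DecidableEq n] (M : Matrix n n ℂ) : Matrix n n ℂ :=
  Matrix.of fun i j => if i = j then M i j else 0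

/-- dephasing of the first (A) factor of a bipartite state, standard (Z eigen-) basis -/
def dephaseA {a b : Type*} [DecidableEq a] (M : Matrix (a × b) (a × b) ℂ) :
    Matrix (a × b) (a × b) ℂ :=
  Matrix.of fun p q => if p.1 = q.1 then M p q else 0

/-- dephasing of the first (A) factor in the Fourier (X eigen-) basis -/
noncomputable def dephaseXA (d : ℕ) {b : Type*} [Fintype b] [DecidableEq b]
    (M : Matrix (Fin d × b) (Fin d × b) ℂ) : Matrix (Fin d × b) (Fin d × b) ℂ :=
  (fourierMat d ⊗ₖ (1 : Matrix b b ℂ)) *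
    dephaseA ((fourierMat d ⊗ₖ (1 : Matrix b b ℂ))ᴴ * M * (fourierMat d ⊗ₖ (1 : Matrix b b ℂ))) *
    (fourierMat d ⊗ₖ (1 : Matrix b b ℂ))ᴴ

/-- reduced state on A of a bipartite state -/
def r2A {a b : Type*} [Fintype b] (M : Matrix (a × b) (a × b) ℂ) : Matrix a a ℂ :=
  Matrix.of fun i j => ∑ y : b, M (i, y) (j, y)

/-- reduced state on B of a bipartite state -/
def r2B {a b : Type*} [Fintype a] (M : Matrix (a × b) (a × b) ℂ) : Matrix b b ℂ :=
  Matrix.of fun i j => ∑ x : a, M (x, i) (x, j)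

/-- reduced state on AB of a tripartite state on A ⊗ B ⊗ E -/
def rAB {a b e : Type*} [Fintype e] (M : Matrix (a × b × e) (a × b × e) ℂ) :
    Matrix (a × b) (a × b) ℂ :=
  Matrix.of fun p q => ∑ x : e, M (p.1, p.2, x) (q.1, q.2, x)

/-- reduced state on AE of a tripartite state -/
def rAE {a b e : Type*} [Fintype b] (M : Matrix (a × b × e) (a × b × e) ℂ) :
    Matrix (a × e) (a × e) ℂ :=
  Matrix.of fun p q => ∑ y : b, M (p.1, y, p.2) (q.1, y, q.2)

/-- reduced state on A of a tripartite state -/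
def rA {a b e : Type*} [Fintype b] [Fintype e] (M : Matrix (a × b × e) (a × b × e) ℂ) :
    Matrix a a ℂ :=
  Matrix.of fun i j => ∑ y : b, ∑ x : e, M (i, y, x) (j, y, x)

/-- reduced state on B of a tripartite state -/
def rB {a b e : Type*} [Fintype a] [Fintype e] (M : Matrix (a × b × e) (a × b × e) ℂ) :
    Matrix b b ℂ :=
  Matrix.of fun i j => ∑ x : a, ∑ z : e, M (x, i, z) (x, j, z)

/-- reduced state on E of a tripartite state -/
def rE {a b e : Type*} [Fintype a] [Fintype b] (M : Matrix (a × b × e) (a × b × e) ℂ) :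
    Matrix e e ℂ :=
  Matrix.of fun i j => ∑ x : a, ∑ y : b, M (x, y, i) (x, y, j)

/-- matrix logarithm (base 2) of a Hermitian matrix via spectral decomposition -/
noncomputable def mlog {n : Type*} [Fintype n] [DecidableEq n] (M : Matrix n n ℂ) :
    Matrix n n ℂ :=
  if h : M.IsHermitian then
    (h.eigenvectorUnitary : Matrix n n ℂ) *
      Matrix.diagonal (fun i => (Real.logb 2 (h.eigenvalues i) : ℂ)) *
      (h.eigenvectorUnitary : Matrix n n ℂ)ᴴ
  else 0

/-- quantum relative entropy S(ρ‖σ) = Tr[ρ(log₂ρ − log₂σ)] -/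
noncomputable def relEnt {n : Type*} [Fintype n] [DecidableEq n] (ρ σ : Matrix n n ℂ) : ℝ :=
  ((ρ * (mlog ρ - mlog σ)).trace).re

/-- trace norm of a Hermitian matrix -/
noncomputable def traceNorm {n : Type*} [Fintype n] [DecidableEq n] (M : Matrix n n ℂ) : ℝ :=
  if h : M.IsHermitian then ∑ i, |h.eigenvalues i| else 0


lemma vN_eq_roots {n : Type*} [Fintype n] [DecidableEq n] {M : Matrix n n ℂ} (h : M.IsHermitian) :
    vN M = (M.charpoly.roots.map fun z : ℂ => -(z.re * Real.logb 2 z.re)).sum := by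
  rw [vN, dif_pos h, h.roots_charpoly_eq_eigenvalues, Multiset.map_map]
  simp

lemma vN_transpose {n : Type*} [Fintype n] [DecidableEq n] {M : Matrix n n ℂ}
    (h : M.IsHermitian) : vN Mᵀ = vN M := by
  rw [vN_eq_roots h, vN_eq_roots h.transpose, Matrix.charpoly_transpose]

lemma vN_mul_comm {m n : Type*} [Fintype m] [DecidableEq m] [Fintype n] [DecidableEq n]
    (A : Matrix m n ℂ) : vN (A * Aᴴ) = vN (Aᴴ * A) := by
  rw [vN_eq_roots (isHermitian_mul_conjTranspose_self A),
    vN_eq_roots (isHermitian_conjTranspose_mul_self A)]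
  have h := congrArg Polynomial.roots (Matrix.charpoly_mul_comm' A Aᴴ)
  rw [Polynomial.roots_mul (mul_ne_zero (by simp) (Matrix.charpoly_monic _).ne_zero),
    Polynomial.roots_mul (mul_ne_zero (by simp) (Matrix.charpoly_monic _).ne_zero)] at h
  have h2 := congrArg (fun s : Multiset ℂ => (s.map fun z : ℂ => -(z.re * Real.logb 2 z.re)).sum) h
  simpa [Polynomial.roots_pow, Multiset.map_nsmul, Multiset.sum_nsmul] using h2

lemma vN_conj {n : Type*} [Fintype n] [DecidableEq n] {M W : Matrix n n ℂ}
    (h : M.IsHermitian) (hW : Wᴴ * W = 1) : vN (W * M * Wᴴ) = vN M := by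
  rw [vN_eq_roots h, vN_eq_roots (isHermitian_mul_mul_conjTranspose W h),
    Matrix.charpoly_mul_comm, ← mul_assoc, hW, one_mul]

lemma vN_diag {n : Type*} [Fintype n] [DecidableEq n] (p : n → ℝ) :
    vN (diagonal fun i => (p i : ℂ)) = ∑ i, -(p i * Real.logb 2 (p i)) := by
  have h : (diagonal fun i => (p i : ℂ)).IsHermitian := by
    rw [Matrix.isHermitian_diagonal_iff]; intro i; simp [isSelfAdjoint_iff]
  rw [vN_eq_roots h, Matrix.charpoly_diagonal, Polynomial.roots_prod]
  · simp
  · simp [Finset.prod_ne_zero_iff, Polynomial.X_sub_C_ne_zero]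

/-- diagonalization data -/
structure Dg {n : Type*} [Fintype n] [DecidableEq n] (M U : Matrix n n ℂ) (p : n → ℝ) : Prop where
  u : Uᴴ * U = 1
  nn : ∀ i, 0 ≤ p i
  eq : M = U * (diagonal fun i => (p i : ℂ)) * Uᴴ

lemma Dg.u' {n : Type*} [Fintype n] [DecidableEq n] {M U : Matrix n n ℂ} {p : n → ℝ}
    (h : Dg M U p) : U * Uᴴ = 1 := mul_eq_one_comm.mp h.u

lemma Dg.vN_eq {n : Type*} [Fintype n] [DecidableEq n] {M U : Matrix n n ℂ} {p : n → ℝ}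
    (h : Dg M U p) : vN M = ∑ i, -(p i * Real.logb 2 (p i)) := by
  rw [h.eq, vN_conj _ h.u, vN_diag]
  rw [Matrix.isHermitian_diagonal_iff]; intro i; simp [isSelfAdjoint_iff]

lemma Dg.of_psd {n : Type*} [Fintype n] [DecidableEq n] {M : Matrix n n ℂ} (h : M.PosSemidef) :
    Dg M (h.1.eigenvectorUnitary : Matrix n n ℂ) h.1.eigenvalues where
  u := by simpa [star_eq_conjTranspose] using Unitary.coe_star_mul_self h.1.eigenvectorUnitary
  nn := h.eigenvalues_nonneg
  eq := by
    conv_lhs => rw [h.1.spectral_theorem]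
    rw [Unitary.conjStarAlgAut_apply, star_eq_conjTranspose]
    rfl

lemma Dg.trace {n : Type*} [Fintype n] [DecidableEq n] {M U : Matrix n n ℂ} {p : n → ℝ}
    (h : Dg M U p) : M.trace = ((∑ i, p i : ℝ) : ℂ) := by
  rw [h.eq, Matrix.trace_mul_comm, ← mul_assoc, h.u, one_mul, trace_diagonal]; simp

/-- overlaps -/
def ovl {n : Type*} [Fintype n] (U V : Matrix n n ℂ) (i j : n) : ℝ :=
  Complex.normSq ((Uᴴ * V) i j)

def GG {n : Type*} [Fintype n] (s : ℝ) (U : Matrix n n ℂ) (p : n → ℝ) (V : Matrix n n ℂ)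
    (q : n → ℝ) : ℝ :=
  ∑ i, ∑ j, ovl U V i j * (p i ^ 2 / ((1 - s) * p i + s * q j))

def val {n : Type*} [Fintype n] (s : ℝ) (ρ σ K : Matrix n n ℂ) : ℝ :=
  2 * (ρ * K).trace.re - (1 - s) * (ρ * (K * Kᴴ)).trace.re - s * (σ * (Kᴴ * K)).trace.re

lemma val_eq {n : Type*} [Fintype n] [DecidableEq n] (s : ℝ) {ρ σ U V : Matrix n n ℂ}
    {p q : n → ℝ} (hρ : Dg ρ U p) (hσ : Dg σ V q) (C : Matrix n n ℂ) :
    val s ρ σ (U * C * Vᴴ) = ∑ i, ∑ j, (2 * p i * (C i j * star ((Uᴴ * V) i j)).re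
      - ((1 - s) * p i + s * q j) * Complex.normSq (C i j)) := by
  have h1 : (ρ * (U * C * Vᴴ)).trace
      = ((diagonal fun i => (p i : ℂ)) * C * (Uᴴ * V)ᴴ).trace := by
    rw [hρ.eq]
    have : U * (diagonal fun i => (p i : ℂ)) * Uᴴ * (U * C * Vᴴ)
      = U * ((diagonal fun i => (p i : ℂ)) * (Uᴴ * U) * C * Vᴴ) := by simp only [mul_assoc]
    rw [this, hρ.u, Matrix.trace_mul_comm, conjTranspose_mul, conjTranspose_conjTranspose]
    simp only [mul_assoc, mul_one, one_mul]
  have h2 : (ρ * ((U * C * Vᴴ) * (U * C * Vᴴ)ᴴ)).trace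
      = ((diagonal fun i => (p i : ℂ)) * C * Cᴴ).trace := by
    rw [hρ.eq]
    have : U * (diagonal fun i => (p i : ℂ)) * Uᴴ * ((U * C * Vᴴ) * (U * C * Vᴴ)ᴴ)
      = U * ((diagonal fun i => (p i : ℂ)) * (Uᴴ * U) * C * (Vᴴ * V) * Cᴴ * Uᴴ) := by
      simp only [mul_assoc, conjTranspose_mul, conjTranspose_conjTranspose]
    rw [this, hρ.u, hσ.u, Matrix.trace_mul_comm]
    simp only [mul_assoc, mul_one, one_mul, hρ.u]
  have h3 : (σ * ((U * C * Vᴴ)ᴴ * (U * C * Vᴴ))).trace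
      = (C * (diagonal fun i => (q i : ℂ)) * Cᴴ).trace := by
    rw [hσ.eq]
    have : V * (diagonal fun i => (q i : ℂ)) * Vᴴ * ((U * C * Vᴴ)ᴴ * (U * C * Vᴴ))
      = V * (((diagonal fun i => (q i : ℂ)) * (Vᴴ * V) * Cᴴ * (Uᴴ * U)) * C * Vᴴ) := by
      simp only [mul_assoc, conjTranspose_mul, conjTranspose_conjTranspose]
    rw [this, hρ.u, hσ.u, Matrix.trace_mul_comm]
    simp only [mul_assoc, mul_one, one_mul, hσ.u]
    rw [Matrix.trace_mul_comm C, mul_assoc]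
  unfold val
  rw [h1, h2, h3]
  simp only [Matrix.trace, Matrix.diag_apply, Matrix.mul_apply (N := (Uᴴ * V)ᴴ),
    Matrix.mul_apply (N := Cᴴ), Matrix.diagonal_mul, Matrix.mul_diagonal, Complex.re_sum,
    Finset.mul_sum, ← Finset.sum_sub_distrib, conjTranspose_apply (M := Uᴴ * V),
    conjTranspose_apply (M := C)]
  refine Finset.sum_congr rfl fun i _ => Finset.sum_congr rfl fun j _ => ?_
  simp [Complex.normSq_apply]
  ring

lemma val_le {n : Type*} [Fintype n] [DecidableEq n] {s : ℝ} (hs : s ∈ Set.Ioo (0 : ℝ) 1)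
    {ρ σ U V : Matrix n n ℂ}
    {p q : n → ℝ} (hρ : Dg ρ U p) (hσ : Dg σ V q) (K : Matrix n n ℂ) :
    val s ρ σ K ≤ GG s U p V q := by
  have hK : K = U * (Uᴴ * K * V) * Vᴴ := by
    have : U * (Uᴴ * K * V) * Vᴴ = (U * Uᴴ) * K * (V * Vᴴ) := by simp only [mul_assoc]
    rw [this, hρ.u', hσ.u']; simp
  rw [hK, val_eq s hρ hσ, GG]
  refine Finset.sum_le_sum fun i _ => Finset.sum_le_sum fun j _ => ?_
  generalize (Uᴴ * K * V) i j = c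
  unfold ovl
  generalize (Uᴴ * V) i j = t
  have h1 := mul_nonneg (sub_pos.2 hs.2).le (hρ.nn i)
  have h2 := mul_nonneg hs.1.le (hσ.nn j)
  rcases (add_nonneg h1 h2).eq_or_lt with h | h
  · have hp : p i = 0 := by
      have : (1 - s) * p i = 0 := by linarith
      rcases mul_eq_zero.1 this with h' | h'
      · linarith [hs.2]
      · exact h'
    rw [← h]; simp [hp]
  · generalize (1 - s) * p i + s * q j = D at h
    rw [← mul_div_assoc, le_div_iff₀ h]
    have e : (c * star t).re = c.re * t.re + c.im * t.im := by simp
    rw [e, Complex.normSq_apply, Complex.normSq_apply]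
    nlinarith [sq_nonneg (D * c.re - p i * t.re), sq_nonneg (D * c.im - p i * t.im)]

lemma val_opt {n : Type*} [Fintype n] [DecidableEq n] {s : ℝ}
    {ρ σ U V : Matrix n n ℂ}
    {p q : n → ℝ} (hρ : Dg ρ U p) (hσ : Dg σ V q) :
    val s ρ σ (U * (Matrix.of fun i j => ((p i / ((1 - s) * p i + s * q j) : ℝ) : ℂ) * (Uᴴ * V) i j)
      * Vᴴ) = GG s U p V q := by
  rw [val_eq s hρ hσ, GG]
  refine Finset.sum_congr rfl fun i _ => Finset.sum_congr rfl fun j _ => ?_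
  unfold ovl
  simp only [Matrix.of_apply]
  generalize (Uᴴ * V) i j = t
  rw [Complex.normSq_mul, Complex.normSq_ofReal]
  have e : t * star t = (Complex.normSq t : ℂ) := by
    simpa using Complex.mul_conj t
  rw [mul_assoc (Complex.ofReal _) t, e, ← Complex.ofReal_mul, Complex.ofReal_re]
  generalize (1 - s) * p i + s * q j = D
  by_cases h : D = 0
  · simp [h]
  · field_simp; ring

def BD {a b : Type*} (L : Matrix (a × b) (a × b) ℂ) : Prop := ∀ p q, p.1 ≠ q.1 → L p q = 0

lemma BD.mul {a b : Type*} [Fintype a] [Fintype b] {L M : Matrix (a × b) (a × b) ℂ}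
    (hL : BD L) (hM : BD M) : BD (L * M) := by
  intro p q h
  rw [Matrix.mul_apply]
  refine Finset.sum_eq_zero fun r _ => ?_
  by_cases h' : p.1 = r.1
  · rw [hM r q (by rwa [← h']), mul_zero]
  · rw [hL p r h', zero_mul]

lemma BD.ct {a b : Type*} {L : Matrix (a × b) (a × b) ℂ}
    (hL : BD L) : BD Lᴴ := by
  intro p q h
  simp [conjTranspose_apply, hL q p (Ne.symm h)]

lemma BD.trace {a b : Type*} [Fintype a] [Fintype b] [DecidableEq a]
    {L : Matrix (a × b) (a × b) ℂ} (hL : BD L) (M : Matrix (a × b) (a × b) ℂ) :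
    (dephaseA M * L).trace = (M * L).trace := by
  simp only [Matrix.trace, Matrix.diag_apply, Matrix.mul_apply]
  refine Finset.sum_congr rfl fun i _ => Finset.sum_congr rfl fun j _ => ?_
  by_cases h : i.1 = j.1
  · simp [dephaseA, h]
  · simp [hL j i (Ne.symm h)]

lemma GG_dpi {a b : Type*} [Fintype a] [Fintype b] [DecidableEq a] [DecidableEq b]
    {s : ℝ} (hs : s ∈ Set.Ioo (0 : ℝ) 1) {ρ σ U V U' V' : Matrix (a × b) (a × b) ℂ}
    {p q p' q' : a × b → ℝ} (hρ : Dg ρ U p) (hσ : Dg σ V q)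
    (hρ' : Dg (dephaseA ρ) U' p') (hσ' : Dg (dephaseA σ) V' q') (hU : BD U') (hV : BD V') :
    GG s U' p' V' q' ≤ GG s U p V q := by
  rw [← val_opt hρ' hσ']
  set C : Matrix (a × b) (a × b) ℂ := (Matrix.of fun i j =>
    ((p' i / ((1 - s) * p' i + s * q' j) : ℝ) : ℂ) * (U'ᴴ * V') i j) with hC
  have bC : BD C := by
    intro i j h
    simp only [hC, Matrix.of_apply]
    rw [(hU.ct.mul hV) i j h, mul_zero]
  have bK := (hU.mul bC).mul hV.ct
  refine le_trans (le_of_eq ?_) (val_le hs hρ hσ (U' * C * V'ᴴ))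
  unfold val
  rw [bK.trace, (bK.mul bK.ct).trace, (bK.ct.mul bK).trace]

lemma log_int {x y : ℝ} (hx : 0 < x) (hy : 0 < y) :
    ContinuousOn (fun s => x * (x - y) / ((1 - s) * x + s * y)) (Set.uIcc (0 : ℝ) 1) ∧
    ∫ s in (0 : ℝ)..1, x * (x - y) / ((1 - s) * x + s * y) = x * (Real.log x - Real.log y) := by
  have hpos : ∀ s ∈ Set.uIcc (0 : ℝ) 1, 0 < (1 - s) * x + s * y := by
    intro s hs
    rw [Set.uIcc_of_le zero_le_one] at hs
    rcases hs.1.eq_or_lt with h | h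
    · rw [← h]; simpa using hx
    · have := mul_nonneg (sub_nonneg.2 hs.2) hx.le
      have := mul_pos h hy
      linarith
  have hc : ContinuousOn (fun s => x * (x - y) / ((1 - s) * x + s * y)) (Set.uIcc (0 : ℝ) 1) := by
    apply ContinuousOn.div (by fun_prop) (by fun_prop)
    intro s hs; exact (hpos s hs).ne'
  refine ⟨hc, ?_⟩
  have hd : ∀ s ∈ Set.uIcc (0 : ℝ) 1,
      HasDerivAt (fun s => -(x * Real.log ((1 - s) * x + s * y)))
        (x * (x - y) / ((1 - s) * x + s * y)) s := by
    intro s hs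
    have h1 : HasDerivAt (fun s : ℝ => (1 - s) * x + s * y) (-1 * x + 1 * y) s :=
      (((hasDerivAt_id s).const_sub 1).mul_const x).add ((hasDerivAt_id s).mul_const y)
    have := ((h1.log (hpos s hs).ne').const_mul x).neg
    refine HasDerivAt.congr_deriv this ?_
    ring
  rw [intervalIntegral.integral_eq_sub_of_hasDerivAt hd hc.intervalIntegrable]
  simp; ring

def RE {n : Type*} [Fintype n] (U : Matrix n n ℂ) (p : n → ℝ) (V : Matrix n n ℂ)
    (q : n → ℝ) : ℝ :=
  ∑ i, ∑ j, ovl U V i j * (p i * (Real.log (p i) - Real.log (q j)))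

lemma term_int {w x y : ℝ} (hx : 0 ≤ x) (hy : 0 ≤ y) (h : y = 0 → w * x = 0) :
    IntervalIntegrable (fun s => w * (x * (x - y) / ((1 - s) * x + s * y))) MeasureTheory.volume 0 1 ∧
    ∫ s in (0 : ℝ)..1, w * (x * (x - y) / ((1 - s) * x + s * y))
      = w * (x * (Real.log x - Real.log y)) := by
  by_cases h0 : w * x = 0
  · have : (fun s => w * (x * (x - y) / ((1 - s) * x + s * y))) = fun _ => 0 := by
      funext s
      rw [← mul_div_assoc, ← mul_assoc, h0]; simp
    rw [this, ← mul_assoc, h0]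
    simp
  · have hx' : 0 < x := hx.lt_of_ne (fun e => h0 (by rw [← e, mul_zero]))
    have hy' : 0 < y := hy.lt_of_ne (fun e => h0 (h e.symm))
    obtain ⟨h1, h2⟩ := log_int hx' hy'
    refine ⟨(h1.intervalIntegrable).const_mul w, ?_⟩
    rw [intervalIntegral.integral_const_mul, h2]

lemma ovl_sum {n : Type*} [Fintype n] [DecidableEq n] {U V : Matrix n n ℂ}
    (hU : Uᴴ * U = 1) (hV : V * Vᴴ = 1) (i : n) : ∑ j, ovl U V i j = 1 := by
  have : ((Uᴴ * V) * (Uᴴ * V)ᴴ) i i = 1 := by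
    have e : (Uᴴ * V) * (Uᴴ * V)ᴴ = Uᴴ * (V * Vᴴ) * U := by
      simp only [mul_assoc, conjTranspose_mul, conjTranspose_conjTranspose]
    rw [e, hV, mul_one, hU, one_apply_eq]
  rw [Matrix.mul_apply] at this
  have h2 := congrArg Complex.re this
  rw [Complex.re_sum] at h2
  simpa [ovl, Complex.normSq_apply] using h2

lemma ovl_diag {n : Type*} [Fintype n] [DecidableEq n] {ρ U V : Matrix n n ℂ} {p : n → ℝ}
    (h : Dg ρ U p) (j : n) : ∑ i, ovl U V i j * p i = ((Vᴴ * ρ * V) j j).re := by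
  have e : Vᴴ * ρ * V = (Uᴴ * V)ᴴ * (diagonal fun i => (p i : ℂ)) * (Uᴴ * V) := by
    rw [h.eq]
    simp only [mul_assoc, conjTranspose_mul, conjTranspose_conjTranspose]
  rw [e, Matrix.mul_apply, Complex.re_sum]
  refine Finset.sum_congr rfl fun i _ => ?_
  rw [Matrix.mul_diagonal, conjTranspose_apply, ovl, Complex.normSq_apply]
  simp; ring

lemma RE_int {n : Type*} [Fintype n] [DecidableEq n] {ρ σ U V : Matrix n n ℂ}
    {p q : n → ℝ} (hρ : Dg ρ U p) (hσ : Dg σ V q)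
    (hsupp : ∀ j, q j = 0 → ((Vᴴ * ρ * V) j j).re = 0) :
    IntervalIntegrable (fun s => ∑ i, ∑ j, ovl U V i j *
      (p i * (p i - q j) / ((1 - s) * p i + s * q j))) MeasureTheory.volume 0 1 ∧
    ∫ s in (0 : ℝ)..1, (∑ i, ∑ j, ovl U V i j *
      (p i * (p i - q j) / ((1 - s) * p i + s * q j))) = RE U p V q := by
  have key : ∀ i j, _ := fun i j => term_int (w := ovl U V i j) (hρ.nn i) (hσ.nn j) (by
    intro h
    have h1 := hsupp j h
    rw [← ovl_diag hρ, Finset.sum_eq_zero_iff_of_nonneg] at h1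
    · exact h1 i (Finset.mem_univ _)
    · intro k _; exact mul_nonneg (Complex.normSq_nonneg _) (hρ.nn k))
  have k2 : ∀ i, IntervalIntegrable (fun s => ∑ j, ovl U V i j *
      (p i * (p i - q j) / ((1 - s) * p i + s * q j))) MeasureTheory.volume 0 1 := fun i => by
    have := IntervalIntegrable.sum Finset.univ (fun j _ => (key i j).1)
    rwa [Finset.sum_fn] at this
  constructor
  · have := IntervalIntegrable.sum Finset.univ (fun i _ => k2 i)
    rwa [Finset.sum_fn] at this
  · rw [intervalIntegral.integral_finsetSum (fun i _ => k2 i), RE]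
    refine Finset.sum_congr rfl fun i _ => ?_
    rw [intervalIntegral.integral_finsetSum (fun j _ => (key i j).1)]
    exact Finset.sum_congr rfl fun j _ => (key i j).2

lemma integrand_eq {n : Type*} [Fintype n] [DecidableEq n] {s : ℝ} (hs : s ∈ Set.Ioo (0 : ℝ) 1)
    {ρ σ U V : Matrix n n ℂ} {p q : n → ℝ} (hρ : Dg ρ U p) (hσ : Dg σ V q) :
    ∑ i, ∑ j, ovl U V i j * (p i * (p i - q j) / ((1 - s) * p i + s * q j))
     = s⁻¹ * (GG s U p V q - ρ.trace.re) := by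
  have ht : ρ.trace.re = ∑ i, ∑ j, ovl U V i j * p i := by
    rw [hρ.trace, Complex.ofReal_re]
    refine Finset.sum_congr rfl fun i _ => ?_
    rw [← Finset.sum_mul, ovl_sum hρ.u hσ.u', one_mul]
  rw [ht, GG, ← Finset.sum_sub_distrib, Finset.mul_sum]
  refine Finset.sum_congr rfl fun i _ => ?_
  rw [← Finset.sum_sub_distrib, Finset.mul_sum]
  refine Finset.sum_congr rfl fun j _ => ?_
  have h1 := mul_nonneg (sub_pos.2 hs.2).le (hρ.nn i)
  have h2 := mul_nonneg hs.1.le (hσ.nn j)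
  rcases (add_nonneg h1 h2).eq_or_lt with h | h
  · have hp : p i = 0 := by
      have : (1 - s) * p i = 0 := by linarith
      rcases mul_eq_zero.1 this with h' | h'
      · linarith [hs.2]
      · exact h'
    simp [hp]
  · have := hs.1.ne'
    have hq : s * q j = ((1 - s) * p i + s * q j) - (1 - s) * p i := by ring
    generalize (1 - s) * p i + s * q j = D at h hq
    have := h.ne'
    field_simp
    linear_combination (-(ovl U V i j * p i)) * hq

lemma RE_dpi {a b : Type*} [Fintype a] [Fintype b] [DecidableEq a] [DecidableEq b]
    {ρ σ U V U' V' : Matrix (a × b) (a × b) ℂ}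
    {p q p' q' : a × b → ℝ} (hρ : Dg ρ U p) (hσ : Dg σ V q)
    (hρ' : Dg (dephaseA ρ) U' p') (hσ' : Dg (dephaseA σ) V' q') (hU : BD U') (hV : BD V')
    (hsupp : ∀ j, q j = 0 → ((Vᴴ * ρ * V) j j).re = 0)
    (hsupp' : ∀ j, q' j = 0 → ((V'ᴴ * dephaseA ρ * V') j j).re = 0) :
    RE U' p' V' q' ≤ RE U p V q := by
  obtain ⟨i1, e1⟩ := RE_int hρ hσ hsupp
  obtain ⟨i2, e2⟩ := RE_int hρ' hσ' hsupp'
  rw [← e1, ← e2]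
  refine intervalIntegral.integral_mono_on_of_le_Ioo zero_le_one i2 i1 fun s hs => ?_
  rw [integrand_eq hs hρ hσ, integrand_eq hs hρ' hσ']
  have ht : (dephaseA ρ).trace = ρ.trace := by simp [Matrix.trace, dephaseA]
  rw [ht]
  have := GG_dpi hs hρ hσ hρ' hσ' hU hV
  have := hs.1
  gcongr

lemma RE_eq {n : Type*} [Fintype n] [DecidableEq n] {ρ σ U V : Matrix n n ℂ}
    {p q : n → ℝ} (hρ : Dg ρ U p) (hσ : Dg σ V q) :
    RE U p V q = -(Real.log 2 * vN ρ) - ∑ j, ((Vᴴ * ρ * V) j j).re * Real.log (q j) := by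
  have h2 : Real.log 2 ≠ 0 := (Real.log_pos (by norm_num)).ne'
  have e1 : -(Real.log 2 * vN ρ) = ∑ i, ∑ j, ovl U V i j * (p i * Real.log (p i)) := by
    rw [hρ.vN_eq, Finset.mul_sum, ← Finset.sum_neg_distrib]
    refine Finset.sum_congr rfl fun i _ => ?_
    rw [← Finset.sum_mul, ovl_sum hρ.u hσ.u', one_mul, Real.logb]
    field_simp
  have e2 : ∑ j, ((Vᴴ * ρ * V) j j).re * Real.log (q j)
      = ∑ i, ∑ j, ovl U V i j * (p i * Real.log (q j)) := by
    rw [Finset.sum_comm]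
    refine Finset.sum_congr rfl fun j _ => ?_
    rw [← ovl_diag hρ, Finset.sum_mul]
    refine Finset.sum_congr rfl fun i _ => by ring
  rw [e1, e2, RE, ← Finset.sum_sub_distrib]
  refine Finset.sum_congr rfl fun i _ => ?_
  rw [← Finset.sum_sub_distrib]
  refine Finset.sum_congr rfl fun j _ => by ring

def toBD {a b : Type*} [DecidableEq a] (f : a → Matrix b b ℂ) : Matrix (a × b) (a × b) ℂ :=
  Matrix.of fun p q => if p.1 = q.1 then f p.1 p.2 q.2 else 0

lemma toBD_BD {a b : Type*} [DecidableEq a] (f : a → Matrix b b ℂ) : BD (toBD f) := by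
  intro p q h; simp [toBD, h]

lemma toBD_mul {a b : Type*} [DecidableEq a] [Fintype a] [Fintype b] (f g : a → Matrix b b ℂ) :
    toBD f * toBD g = toBD fun k => f k * g k := by
  ext ⟨i, x⟩ ⟨j, y⟩
  rw [Matrix.mul_apply, Fintype.sum_prod_type]
  simp only [toBD, Matrix.of_apply]
  rw [Finset.sum_eq_single i]
  · by_cases h : i = j
    · subst h; simp [Matrix.mul_apply]
    · simp [h]
  · intro k _ hk; simp [Ne.symm hk]
  · simp

lemma toBD_ct {a b : Type*} [DecidableEq a] (f : a → Matrix b b ℂ) :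
    (toBD f)ᴴ = toBD fun k => (f k)ᴴ := by
  ext ⟨i, x⟩ ⟨j, y⟩
  by_cases h : i = j
  · subst h; simp [toBD]
  · simp [toBD, h, Ne.symm h]

lemma toBD_diag {a b : Type*} [DecidableEq a] [DecidableEq b] (p : a → b → ℂ) :
    toBD (fun k => diagonal (p k)) = diagonal fun i => p i.1 i.2 := by
  ext ⟨i, x⟩ ⟨j, y⟩
  by_cases h : i = j
  · subst h
    by_cases h' : x = y
    · subst h'; simp [toBD]
    · simp [toBD, h']
  · simp [toBD, h]

lemma toBD_one {a b : Type*} [DecidableEq a] [DecidableEq b] :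
    toBD (fun _ : a => (1 : Matrix b b ℂ)) = 1 := by
  rw [← diagonal_one, ← diagonal_one]
  exact toBD_diag _

def blk {a b : Type*} (H : Matrix (a × b) (a × b) ℂ) (k : a) : Matrix b b ℂ :=
  H.submatrix (fun x => (k, x)) (fun x => (k, x))

lemma dephaseA_eq {a b : Type*} [DecidableEq a] (H : Matrix (a × b) (a × b) ℂ) :
    dephaseA H = toBD (blk H) := by
  ext ⟨i, x⟩ ⟨j, y⟩
  by_cases h : i = j
  · subst h; simp [toBD, dephaseA, blk]
  · simp [toBD, dephaseA, h]

lemma Dg_toBD {a b : Type*} [DecidableEq a] [DecidableEq b] [Fintype a] [Fintype b]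
    {f U : a → Matrix b b ℂ} {p : a → b → ℝ} (h : ∀ k, Dg (f k) (U k) (p k)) :
    Dg (toBD f) (toBD U) (fun i => p i.1 i.2) where
  u := by
    rw [toBD_ct, toBD_mul]
    simp only [(h _).u, toBD_one]
  nn := fun i => (h i.1).nn i.2
  eq := by
    rw [← toBD_diag (fun k x => (p k x : ℂ)), toBD_ct, toBD_mul, toBD_mul]
    congr 1
    funext k
    exact (h k).eq

lemma exists_Dg_dephase {a b : Type*} [DecidableEq a] [DecidableEq b] [Fintype a] [Fintype b]
    {H : Matrix (a × b) (a × b) ℂ} (h : H.PosSemidef) :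
    ∃ U p, Dg (dephaseA H) U p ∧ BD U := by
  have hk : ∀ k, (blk H k).PosSemidef := fun k => h.submatrix _
  rw [dephaseA_eq]
  exact ⟨_, _, Dg_toBD fun k => Dg.of_psd (hk k), toBD_BD _⟩

lemma BD.diag {a b : Type*} [DecidableEq a] [Fintype a] [Fintype b]
    {W : Matrix (a × b) (a × b) ℂ} (hW : BD W) (M : Matrix (a × b) (a × b) ℂ) (j : a × b) :
    (Wᴴ * dephaseA M * W) j j = (Wᴴ * M * W) j j := by
  simp only [Matrix.mul_apply, Finset.sum_mul]
  refine Finset.sum_congr rfl fun q _ => Finset.sum_congr rfl fun p _ => ?_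
  by_cases hq : q.1 = j.1
  · by_cases hp : p.1 = j.1
    · simp [dephaseA, hp, hq]
    · simp [conjTranspose_apply, hW p j hp]
  · simp [hW q j hq]

lemma Dg.diag {n : Type*} [Fintype n] [DecidableEq n] {M U : Matrix n n ℂ} {p : n → ℝ}
    (h : Dg M U p) : Uᴴ * M * U = diagonal fun i => (p i : ℂ) := by
  have : Uᴴ * M * U = (Uᴴ * U) * (diagonal fun i => (p i : ℂ)) * (Uᴴ * U) := by
    conv_lhs => rw [h.eq]
    simp only [mul_assoc]
  rw [this, h.u]; simp

lemma kron_conj {a a' b : Type*} [Fintype a] [Fintype b] [DecidableEq b]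
    (F : Matrix a' a ℂ) (X : Matrix (a × b) (a × b) ℂ) (i i' : a') (y y' : b) :
    ((F ⊗ₖ (1 : Matrix b b ℂ)) * X * (F ⊗ₖ (1 : Matrix b b ℂ))ᴴ) (i, y) (i', y')
      = ∑ j', ∑ j, F i j * X (j, y) (j', y') * star (F i' j') := by
  simp only [Matrix.mul_apply, Fintype.sum_prod_type, Finset.sum_mul, conjTranspose_apply,
    kroneckerMap_apply, Matrix.one_apply]
  simp
  refine Finset.sum_congr rfl fun j' _ => ?_
  rw [Finset.sum_eq_single y']
  · simp
  · intro z _ hz; simp [Ne.symm hz]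
  · simp

lemma fourier_normSq (d : ℕ) [NeZero d] (k j : Fin d) :
    fourierMat d k j * star (fourierMat d k j) = 1 / d := by
  have hq : ‖qomega d‖ = 1 := (Complex.isPrimitiveRoot_exp d (NeZero.ne d)).norm'_eq_one (NeZero.ne d)
  have := Complex.mul_conj (fourierMat d k j)
  rw [Complex.star_def, this, Complex.normSq_eq_norm_sq]
  simp [fourierMat, hq]

lemma fourier_unitary (d : ℕ) [NeZero d] : (fourierMat d)ᴴ * fourierMat d = 1 := by
  have hd : (d : ℂ) ≠ 0 := Nat.cast_ne_zero.2 (NeZero.ne d)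
  have hp : IsPrimitiveRoot (qomega d) d := Complex.isPrimitiveRoot_exp d (NeZero.ne d)
  have hq : ‖qomega d‖ = 1 := hp.norm'_eq_one (NeZero.ne d)
  have hq0 : qomega d ≠ 0 := hp.ne_zero (NeZero.ne d)
  have hinv : star (qomega d) = (qomega d)⁻¹ := by
    rw [Complex.star_def, Complex.inv_def, Complex.normSq_eq_norm_sq, hq]; simp
  ext j j'
  by_cases h : j = j'
  · subst h
    rw [Matrix.mul_apply, one_apply_eq]
    simp only [conjTranspose_apply, mul_comm (star _), fourier_normSq]
    simp [hd]
  · rw [Matrix.mul_apply, one_apply_ne h]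
    set z : ℂ := (qomega d) ^ ((j' : ℕ) : ℤ) * (qomega d) ^ (-((j : ℕ) : ℤ)) with hz
    have hzz : z = (qomega d) ^ (((j' : ℕ) : ℤ) - ((j : ℕ) : ℤ)) := by
      rw [hz, ← zpow_add₀ hq0, sub_eq_add_neg]
    have hz1 : z ≠ 1 := by
      rw [hzz, Ne, hp.zpow_eq_one_iff_dvd]
      intro hdv
      apply h
      have h1 := j.2
      have h2 := j'.2
      have := Int.eq_zero_of_abs_lt_dvd hdv (by rw [abs_lt]; constructor <;> omega)
      ext; omega
    have hzd : z ^ d = 1 := by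
      rw [hzz, ← zpow_natCast, ← _root_.zpow_mul, mul_comm, _root_.zpow_mul, zpow_natCast, hp.pow_eq_one,
        _root_.one_zpow]
    have e : ∀ k : Fin d, (fourierMat d)ᴴ j k * fourierMat d k j' = z ^ (k : ℕ) / d := by
      intro k
      have hs : ((Real.sqrt d : ℝ) : ℂ) * ((Real.sqrt d : ℝ) : ℂ) = d := by
        rw [← Complex.ofReal_mul, Real.mul_self_sqrt (by positivity)]; simp
      rw [conjTranspose_apply]
      simp only [fourierMat, Matrix.of_apply, star_div₀, star_pow, hinv]
      rw [Complex.star_def, Complex.conj_ofReal, div_mul_div_comm, hs, hz]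
      congr 1
      rw [mul_pow, pow_mul, pow_mul, mul_comm]
      simp
    simp only [e]
    rw [← Finset.sum_div, Fin.sum_univ_eq_sum_range (fun k => z ^ k) d, geom_sum_eq hz1, hzd]
    simp

lemma F1_unitary (d : ℕ) [NeZero d] (b : Type*) [Fintype b] [DecidableEq b] :
    (fourierMat d ⊗ₖ (1 : Matrix b b ℂ))ᴴ * (fourierMat d ⊗ₖ (1 : Matrix b b ℂ)) = 1 := by
  rw [conjTranspose_kronecker, ← mul_kronecker_mul, fourier_unitary]
  simp

lemma dephase_dephaseX (d : ℕ) [NeZero d] {b : Type*} [Fintype b] [DecidableEq b]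
    (τ : Matrix (Fin d × b) (Fin d × b) ℂ) :
    dephaseA (dephaseXA d τ) = toBD fun _ => ((1 / d : ℝ) : ℂ) • r2B τ := by
  have hF : fourierMat d * (fourierMat d)ᴴ = 1 := mul_eq_one_comm.mp (fourier_unitary d)
  ext ⟨i, y⟩ ⟨i', y'⟩
  by_cases h : i = i'
  swap
  · simp [dephaseA, toBD, h]
  subst h
  have e1 : dephaseA (dephaseXA d τ) (i, y) (i, y') = dephaseXA d τ (i, y) (i, y') := by
    simp [dephaseA]
  rw [e1, dephaseXA, kron_conj]
  set H := ((fourierMat d ⊗ₖ (1 : Matrix b b ℂ))ᴴ * τ * (fourierMat d ⊗ₖ (1 : Matrix b b ℂ)))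
    with hH
  have e2 : ∀ j' j, fourierMat d i j * dephaseA H (j, y) (j', y') * star (fourierMat d i j')
      = if j = j' then (1 / d : ℂ) * H (j, y) (j, y') else 0 := by
    intro j' j
    by_cases hj : j = j'
    · subst hj
      rw [← fourier_normSq d i j]
      simp [dephaseA]; ring
    · simp [dephaseA, hj]
  simp only [e2]
  simp only [Finset.sum_ite_eq', Finset.mem_univ, if_true]
  rw [← Finset.mul_sum]
  have e3 : ∑ j, H (j, y) (j, y') = r2B τ y y' := by
    have hH' : H = ((fourierMat d)ᴴ ⊗ₖ (1 : Matrix b b ℂ)) * τ *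
        ((fourierMat d)ᴴ ⊗ₖ (1 : Matrix b b ℂ))ᴴ := by
      rw [hH]
      simp [conjTranspose_kronecker]
    simp only [hH', kron_conj]
    rw [Finset.sum_comm, r2B, Matrix.of_apply]
    refine Finset.sum_congr rfl fun k' _ => ?_
    rw [Finset.sum_comm]
    rw [Finset.sum_eq_single k']
    · have := congrFun (congrFun hF k') k'
      rw [Matrix.mul_apply, one_apply_eq] at this
      calc _ = (∑ x, fourierMat d k' x * (fourierMat d)ᴴ x k') * τ (k', y) (k', y') := by
            rw [Finset.sum_mul]
            refine Finset.sum_congr rfl fun x _ => ?_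
            simp [conjTranspose_apply]; ring
        _ = _ := by rw [this, one_mul]
    · intro k _ hk
      have := congrFun (congrFun hF k') k
      rw [Matrix.mul_apply, one_apply_ne (Ne.symm hk)] at this
      calc _ = (∑ x, fourierMat d k' x * (fourierMat d)ᴴ x k) * τ (k, y) (k', y') := by
            rw [Finset.sum_mul]
            refine Finset.sum_congr rfl fun x _ => ?_
            simp [conjTranspose_apply]; ring
        _ = _ := by rw [this, zero_mul]
    · simp
  rw [e3]
  simp [toBD]

lemma mixed (d : ℕ) [NeZero d] {e : Type*} [Fintype e] [DecidableEq e]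
    (τ : Matrix (Fin d × e) (Fin d × e) ℂ) (hτ : τ.PosSemidef) (ht : τ.trace = 1) :
    Real.logb 2 d ≤ vN (dephaseXA d τ) - vN τ + (vN (dephaseA τ) - vN (r2B τ)) := by
  have hd : (0 : ℝ) < d := Nat.cast_pos.2 (NeZero.pos d)
  have hL : 0 < Real.log 2 := Real.log_pos (by norm_num)
  have d1 := Dg.of_psd hτ
  set F := fourierMat d ⊗ₖ (1 : Matrix e e ℂ) with hF
  have hFu : Fᴴ * F = 1 := F1_unitary d e
  have hH : (Fᴴ * τ * F).PosSemidef := hτ.conjTranspose_mul_mul_same F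
  obtain ⟨W, q, hW, bW⟩ := exists_Dg_dephase hH
  have dσ : Dg (dephaseXA d τ) (F * W) q := by
    refine ⟨?_, hW.nn, ?_⟩
    · rw [conjTranspose_mul]
      calc _ = Wᴴ * (Fᴴ * F) * W := by simp only [mul_assoc]
        _ = 1 := by rw [hFu, mul_one, hW.u]
    · rw [dephaseXA, ← hF, hW.eq, conjTranspose_mul]
      simp only [mul_assoc]
  have hdiag : ∀ j, (((F * W)ᴴ * τ * (F * W)) j j).re = q j := by
    intro j
    have : (F * W)ᴴ * τ * (F * W) = Wᴴ * (Fᴴ * τ * F) * W := by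
      rw [conjTranspose_mul]; simp only [mul_assoc]
    rw [this, ← bW.diag, hW.diag]; simp
  obtain ⟨U', p', d2, bU⟩ := exists_Dg_dephase hτ
  have hblk : ∀ k, (blk τ k).PosSemidef := fun k => hτ.submatrix _
  have hsum : r2B τ = ∑ k, blk τ k := by
    ext x y; simp [r2B, blk, Matrix.sum_apply]
  have hE : (r2B τ).PosSemidef := by
    rw [hsum]; exact Matrix.posSemidef_sum _ fun k _ => hblk k
  have dE := Dg.of_psd hE
  set VE : Matrix e e ℂ := (hE.1.eigenvectorUnitary : Matrix e e ℂ)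
  set r := hE.1.eigenvalues
  have d3 : Dg (dephaseA (dephaseXA d τ)) (toBD fun _ : Fin d => VE)
      (fun i => (fun (_ : Fin d) n => 1 / d * r n) i.1 i.2) := by
    rw [dephase_dephaseX]
    refine Dg_toBD fun k => ⟨dE.u, fun i => mul_nonneg (by positivity) (dE.nn i), ?_⟩
    conv_lhs => rw [dE.eq]
    rw [← smul_mul_assoc, ← mul_smul_comm, ← diagonal_smul]
    congr 3
    funext i
    simp
  have hm : ∀ k n, (((toBD fun _ : Fin d => VE)ᴴ * dephaseA τ * (toBD fun _ : Fin d => VE))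
      (k, n) (k, n)) = (VEᴴ * blk τ k * VE) n n := by
    intro k n
    rw [dephaseA_eq, toBD_ct, toBD_mul, toBD_mul]
    simp [toBD]
  have hm0 : ∀ k n, 0 ≤ ((VEᴴ * blk τ k * VE) n n).re := by
    intro k n
    have := ((hblk k).conjTranspose_mul_mul_same VE).diag_nonneg (i := n)
    exact (Complex.le_def.1 this).1
  have hms : ∀ n, ∑ k, ((VEᴴ * blk τ k * VE) n n).re = r n := by
    intro n
    have h1 := congrFun (congrFun dE.diag n) n
    rw [hsum, Matrix.mul_sum, Matrix.sum_mul, Matrix.sum_apply] at h1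
    rw [← Complex.re_sum, h1]; simp
  have key := RE_dpi d1 dσ d2 d3 bU (toBD_BD _) (fun j hj => by rw [hdiag, hj]) (by
    rintro ⟨k, n⟩ h0
    rw [hm]
    have hr : r n = 0 := by
      rcases mul_eq_zero.1 h0 with h | h
      · exact absurd h (by positivity)
      · exact h
    have := hms n
    rw [hr, Finset.sum_eq_zero_iff_of_nonneg (fun k _ => hm0 k n)] at this
    exact this k (Finset.mem_univ _))
  rw [RE_eq d1 dσ, RE_eq d2 d3] at key
  have k1 : ∑ j, (((F * W)ᴴ * τ * (F * W)) j j).re * Real.log (q j)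
      = - (Real.log 2 * vN (dephaseXA d τ)) := by
    rw [dσ.vN_eq, Finset.mul_sum, ← Finset.sum_neg_distrib]
    refine Finset.sum_congr rfl fun j _ => ?_
    rw [hdiag, Real.logb]; field_simp
  have hr1 : ∑ n, r n = 1 := by
    have h1 := dE.trace
    have h2 : (r2B τ).trace = τ.trace := by
      simp only [Matrix.trace, Matrix.diag_apply, r2B, Matrix.of_apply, Fintype.sum_prod_type]
      rw [Finset.sum_comm]
    rw [h2, ht] at h1
    exact_mod_cast h1.symm
  have k2 : ∑ j : Fin d × e, (((toBD fun _ : Fin d => VE)ᴴ * dephaseA τ *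
      (toBD fun _ : Fin d => VE)) j j).re * Real.log (1 / d * r j.2)
      = - (Real.log 2 * vN (r2B τ)) - Real.log d := by
    rw [Fintype.sum_prod_type]
    simp only [hm]
    rw [Finset.sum_comm]
    simp only [← Finset.sum_mul, hms]
    have : Real.log d = ∑ n, r n * Real.log d := by rw [← Finset.sum_mul, hr1, one_mul]
    rw [this, dE.vN_eq, Finset.mul_sum, ← Finset.sum_neg_distrib, ← Finset.sum_sub_distrib]
    refine Finset.sum_congr rfl fun n _ => ?_
    by_cases h : r n = 0
    · simp [h]
    · rw [Real.log_mul (by positivity) h, one_div, Real.log_inv, Real.logb]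
      field_simp
      ring
  rw [k1] at key
  erw [k2] at key
  rw [Real.logb, div_le_iff₀ hL]
  linarith

lemma vNX (d : ℕ) [NeZero d] {c : Type*} [Fintype c] [DecidableEq c]
    {τ : Matrix (Fin d × c) (Fin d × c) ℂ} (hτ : τ.PosSemidef) :
    vN (dephaseXA d τ) = vN (dephaseA
        (((fourierMat d)ᴴ ⊗ₖ (1 : Matrix c c ℂ)) * τ *
          ((fourierMat d)ᴴ ⊗ₖ (1 : Matrix c c ℂ))ᴴ)) := by
  have e : ((fourierMat d)ᴴ ⊗ₖ (1 : Matrix c c ℂ)) = (fourierMat d ⊗ₖ (1 : Matrix c c ℂ))ᴴ := by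
    simp [conjTranspose_kronecker]
  rw [e, conjTranspose_conjTranspose, dephaseXA, vN_conj _ (F1_unitary d c)]
  have h := (hτ.conjTranspose_mul_mul_same (fourierMat d ⊗ₖ (1 : Matrix c c ℂ))).1
  ext p q
  have := congrFun (congrFun h p) q
  rw [conjTranspose_apply] at this ⊢
  by_cases hh : p.1 = q.1
  · simpa [dephaseA, hh] using this
  · simp [dephaseA, hh, Ne.symm hh]

/-- strong complementary information tradeoff for pure states:
S(X^A|B)_ρ + S(Z^A|E)_ρ ≥ log₂ d. -/
theorem strong_CIT_pure (d : ℕ) [NeZero d]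
    {b e : Type*} [Fintype b] [DecidableEq b] [Fintype e] [DecidableEq e]
    (ψ : Fin d × b × e → ℂ) (hψ : ∑ p, Complex.normSq (ψ p) = 1) :
    (fun ρ : Matrix (Fin d × b × e) (Fin d × b × e) ℂ =>
      (vN (dephaseXA d (rAB ρ)) - vN (rB ρ)) + (vN (dephaseA (rAE ρ)) - vN (rE ρ))
        ≥ Real.logb 2 d)
      (Matrix.of fun p q => ψ p * star (ψ q)) := by
  show _ ≤ _
  set ρ : Matrix (Fin d × b × e) (Fin d × b × e) ℂ := Matrix.of fun p q => ψ p * star (ψ q) with hρ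
  let M : Matrix b (Fin d × e) ℂ := Matrix.of fun y p => ψ (p.1, y, p.2)
  have hB : rB ρ = M * Mᴴ := by
    ext y y'
    simp [rB, hρ, M, Matrix.mul_apply, Fintype.sum_prod_type]
  have hAE : rAE ρ = (Mᴴ * M)ᵀ := by
    ext p q
    simp [rAE, hρ, M, Matrix.mul_apply, mul_comm]
  have hM := posSemidef_conjTranspose_mul_self M
  have hpsd : (rAE ρ).PosSemidef := by
    rw [hAE]; exact hM.transpose
  have v1 : vN (rB ρ) = vN (rAE ρ) := by
    rw [hB, hAE, vN_transpose hM.1, vN_mul_comm]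
  have hE : rE ρ = r2B (rAE ρ) := by
    ext x y; simp [rE, r2B, rAE]
  have htr : (rAE ρ).trace = 1 := by
    have h1 : ((∑ p, Complex.normSq (ψ p) : ℝ) : ℂ) = 1 := by rw [hψ]; simp
    rw [← h1]
    simp only [Matrix.trace, Matrix.diag_apply, rAE, hρ, Matrix.of_apply, Fintype.sum_prod_type]
    push_cast
    refine Finset.sum_congr rfl fun k _ => ?_
    rw [Finset.sum_comm]
    refine Finset.sum_congr rfl fun y _ => Finset.sum_congr rfl fun x _ => ?_
    exact Complex.mul_conj _
  let N : Matrix (Fin d × b) (Fin d × e) ℂ := Matrix.of fun p q =>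
    if p.1 = q.1 then ∑ k, star (fourierMat d k p.1) * ψ (k, p.2, q.2) else 0
  have hM2 : (rAB ρ).PosSemidef := by
    let M2 : Matrix (Fin d × b) e ℂ := Matrix.of fun p x => ψ (p.1, p.2, x)
    have : rAB ρ = M2 * M2ᴴ := by
      ext p q
      simp [rAB, hρ, M2, Matrix.mul_apply]
    rw [this]; exact posSemidef_self_mul_conjTranspose M2
  have n1 : dephaseA (((fourierMat d)ᴴ ⊗ₖ (1 : Matrix b b ℂ)) * rAB ρ *
      ((fourierMat d)ᴴ ⊗ₖ (1 : Matrix b b ℂ))ᴴ) = N * Nᴴ := by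
    ext ⟨j, y⟩ ⟨j', y'⟩
    rw [dephaseA, Matrix.of_apply, kron_conj, Matrix.mul_apply, Fintype.sum_prod_type]
    simp only [conjTranspose_apply, N, Matrix.of_apply, rAB, hρ]
    by_cases h : j = j'
    · subst h
      conv_rhs =>
        rw [Finset.sum_eq_single j (fun l _ hl => by simp [Ne.symm hl ]) (by simp)]
        simp only [if_true, star_sum, star_mul', star_star, Finset.sum_mul_sum]
        rw [Finset.sum_comm]
      simp only [Finset.sum_mul, Finset.mul_sum, star_star]
      rw [Finset.sum_comm]
      refine Finset.sum_congr rfl fun k _ => ?_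
      rw [Finset.sum_comm]
      refine Finset.sum_congr rfl fun x _ => ?_
      refine Finset.sum_congr rfl fun k' _ => ?_
      ring
    · rw [if_neg h]
      symm
      refine Finset.sum_eq_zero fun l _ => Finset.sum_eq_zero fun x _ => ?_
      by_cases hl : j = l
      · subst hl; simp [Ne.symm h]
      · simp [hl]
  have n2 : dephaseA (((fourierMat d)ᴴ ⊗ₖ (1 : Matrix e e ℂ)) * rAE ρ *
      ((fourierMat d)ᴴ ⊗ₖ (1 : Matrix e e ℂ))ᴴ) = (Nᴴ * N)ᵀ := by
    ext ⟨j, y⟩ ⟨j', y'⟩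
    rw [dephaseA, Matrix.of_apply, kron_conj, transpose_apply, Matrix.mul_apply,
      Fintype.sum_prod_type]
    simp only [conjTranspose_apply, N, Matrix.of_apply, rAE, hρ]
    by_cases h : j = j'
    · subst h
      conv_rhs =>
        rw [Finset.sum_eq_single j (fun l _ hl => by simp [hl]) (by simp)]
        simp only [if_true, star_sum, star_mul', star_star, Finset.sum_mul_sum]
        rw [Finset.sum_comm]
      simp only [Finset.sum_mul, Finset.mul_sum, star_star]
      refine Finset.sum_congr rfl fun k _ => ?_
      rw [Finset.sum_comm]
      refine Finset.sum_congr rfl fun x _ => ?_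
      refine Finset.sum_congr rfl fun k' _ => ?_
      ring
    · rw [if_neg h]
      symm
      refine Finset.sum_eq_zero fun l _ => Finset.sum_eq_zero fun x _ => ?_
      by_cases hl : l = j
      · subst hl; simp [h]
      · simp [hl]
  have v2 : vN (dephaseXA d (rAB ρ)) = vN (dephaseXA d (rAE ρ)) := by
    rw [vNX d hM2, vNX d hpsd, n1, n2, vN_mul_comm,
      vN_transpose (isHermitian_conjTranspose_mul_self N)]
  rw [v1, v2, hE]
  exact mixed d (rAE ρ) hpsd htr
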